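/- For every integer d ≥ 3 and every real number c, there exists a probability distribution on R whose d-th cumulant equals c. Consequently, for d ≥ 3, every symmetric tensor T ∈ S^d(R^n) arises as the d-th cumulant tensor of some R^n-valued random vector. -/

import Mathlib

open MeasureTheory

/-- The `d`-th cumulant of a probability distribution `μ` on `ℝ`: the `d`-th derivative at
`0` of the cumulant generating function `t ↦ log ∫ e^{t x} dμ(x)`. -/
noncomputable def cumulant1 (d : ℕ) (μ : Measure ℝ) : ℝ :=
  iteratedDeriv d (fun t => Real.log (∫ x, Real.exp (t * x) ∂μ)) 0

/-- The `d`-th cumulant tensor of a probability distribution `μ` on `ℝ^n`: mixed partial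
derivatives at `0` of `t ↦ log ∫ e^{⟨t, x⟩} dμ(x)`. -/
noncomputable def cumulantTensor (d n : ℕ) (μ : Measure (Fin n → ℝ)) :
    (Fin d → Fin n) → ℝ :=
  fun i => iteratedFDeriv ℝ d
    (fun t : Fin n → ℝ => Real.log (∫ x, Real.exp (∑ j, t j * x j) ∂μ)) 0
    (fun k => Pi.single (i k) (1 : ℝ))

/-!
A linear functional that kills every power `v^{⊗d}` is the zero polynomial in `v`, so its
coefficients sum to zero over each permutation orbit of multi-indices and it kills every symmetric
tensor; by duality `T = ∑ᵢ λᵢ vᵢ^{⊗d}`. Cumulants are homogeneous under scaling and additive over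
independent summands, so independent real `zᵢ` with `κ_d(zᵢ) = λᵢ` make `T` the `d`-th cumulant
tensor of `∑ᵢ zᵢ vᵢ`.

By scaling, the real case only needs distributions whose `d`-th cumulant has either sign. For the
Bernoulli distribution this cumulant is a polynomial in the parameter `p`, equal to `p (1 - p)`
times the derivative of the previous one; for `d ≥ 3` the previous one vanishes at both ends of
`[0, 1]`, so its derivative takes both signs in between.
-/

section SymmetricDecomposition

variable {ι κ K : Type*} [Fintype κ]

/-- The exponent of the monomial `∏ k, X (i k)`: it records how often each value is taken by the
multi-index `i`, and so describes the orbit of `i` under permutations of its positions. -/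
noncomputable def multiIndexType (i : κ → ι) : ι →₀ ℕ :=
  ∑ k, Finsupp.single (i k) 1

lemma card_fiber_eq_multiIndexType (i : κ → ι) (a : ι) :
    Nat.card {k // i k = a} = multiIndexType i a := by
  classical
  rw [Nat.card_eq_fintype_card, Fintype.card_subtype, Finset.card_filter, multiIndexType,
    Finsupp.finsetSum_apply]
  simp only [Finsupp.single_apply]

lemma exists_perm_comp_eq_of_multiIndexType_eq {i j : κ → ι}
    (h : multiIndexType i = multiIndexType j) : ∃ σ : Equiv.Perm κ, j ∘ σ = i := by
  have card_fiber_eq (a : ι) : Nat.card {k // i k = a} = Nat.card {k // j k = a} := by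
    rw [card_fiber_eq_multiIndexType, card_fiber_eq_multiIndexType, h]
  let e (a : ι) : {k // i k = a} ≃ {k // j k = a} := (Finite.card_eq.1 (card_fiber_eq a)).some
  exact ⟨Equiv.ofFiberEquiv e, funext (Equiv.ofFiberEquiv_map e)⟩

lemma monomial_multiIndexType [CommSemiring K] (i : κ → ι) (c : K) :
    MvPolynomial.monomial (multiIndexType i) c =
      MvPolynomial.C c * ∏ k, MvPolynomial.X (i k) := by
  simp only [MvPolynomial.X, ← MvPolynomial.monomial_sum_one, MvPolynomial.C_mul_monomial,
    mul_one, multiIndexType]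

lemma sum_fiber_multiIndexType_eq_zero [CommRing K] [IsDomain K] [Infinite K]
    [Fintype (κ → ι)] [DecidableEq ι] {c : (κ → ι) → K}
    (hc : ∀ v : ι → K, ∑ i, c i * ∏ k, v (i k) = 0) (m : ι →₀ ℕ) :
    ∑ i with multiIndexType i = m, c i = 0 := by
  have polynomial_eq_zero : ∑ i, MvPolynomial.monomial (multiIndexType i) (c i) = 0 :=
    MvPolynomial.funext fun v => by simp [monomial_multiIndexType, hc]
  have coeff_eq_zero := congrArg (MvPolynomial.coeff m) polynomial_eq_zero
  simpa only [MvPolynomial.coeff_sum, MvPolynomial.coeff_monomial, MvPolynomial.coeff_zero,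
    Finset.sum_filter] using coeff_eq_zero

lemma sum_mul_eq_zero_of_symmetric [CommRing K] [IsDomain K] [Infinite K] [Fintype (κ → ι)]
    {c T : (κ → ι) → K}
    (hc : ∀ v : ι → K, ∑ i, c i * ∏ k, v (i k) = 0)
    (hT : ∀ (σ : Equiv.Perm κ) (i : κ → ι), T (i ∘ σ) = T i) :
    ∑ i, T i * c i = 0 := by
  classical
  rw [← Finset.sum_fiberwise_of_maps_to (t := Finset.univ.image multiIndexType)
    fun i _ => Finset.mem_image_of_mem multiIndexType (Finset.mem_univ i)]
  refine Finset.sum_eq_zero fun m hm => ?_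
  obtain ⟨j, -, rfl⟩ := Finset.mem_image.1 hm
  calc ∑ i with multiIndexType i = multiIndexType j, T i * c i
      = ∑ i with multiIndexType i = multiIndexType j, T j * c i := by
        refine Finset.sum_congr rfl fun i hi => ?_
        obtain ⟨σ, rfl⟩ := exists_perm_comp_eq_of_multiIndexType_eq (Finset.mem_filter.1 hi).2
        rw [hT]
    _ = 0 := by rw [← Finset.mul_sum, sum_fiber_multiIndexType_eq_zero hc, mul_zero]

lemma mem_span_range_prod_of_symmetric [Finite ι] [Field K] [Infinite K] {T : (κ → ι) → K}
    (hT : ∀ (σ : Equiv.Perm κ) (i : κ → ι), T (i ∘ σ) = T i) :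
    T ∈ Submodule.span K (Set.range fun (v : ι → K) (i : κ → ι) => ∏ k, v (i k)) := by
  classical
  have := Fintype.ofFinite ι
  by_contra hmem
  obtain ⟨φ, hφT, hφ⟩ := Submodule.exists_le_ker_of_notMem hmem
  have φ_apply (S : (κ → ι) → K) : φ S = ∑ i, S i * φ (Pi.single i 1) := by
    simpa only [map_sum, map_smul, smul_eq_mul, mul_one] using
      congrArg φ (pi_eq_sum_univ' S)
  refine hφT ((φ_apply T).trans (sum_mul_eq_zero_of_symmetric (fun v => ?_) hT))
  have φ_power_eq_zero : φ (fun i => ∏ k, v (i k)) = 0 := hφ (Submodule.subset_span ⟨v, rfl⟩)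
  rw [← φ_power_eq_zero, φ_apply]
  exact Finset.sum_congr rfl fun i _ => mul_comm _ _

lemma exists_eq_sum_mul_prod_of_symmetric [Finite ι] [Field K] [Infinite K] {T : (κ → ι) → K}
    (hT : ∀ (σ : Equiv.Perm κ) (i : κ → ι), T (i ∘ σ) = T i) :
    ∃ (r : ℕ) (c : Fin r → K) (v : Fin r → ι → K),
      ∀ i, T i = ∑ s, c s * ∏ k, v s (i k) := by
  obtain ⟨r, c, w, rfl⟩ := Submodule.mem_span_set'.1 (mem_span_range_prod_of_symmetric hT)
  choose v hv using fun s => (w s).2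
  exact ⟨r, c, v, fun i => by simp [← hv]⟩

end SymmetricDecomposition

section IteratedDerivative

variable {𝕜 E F G : Type*} [NontriviallyNormedField 𝕜]
  [NormedAddCommGroup E] [NormedSpace 𝕜 E] [NormedAddCommGroup F] [NormedSpace 𝕜 F]
  [NormedAddCommGroup G] [NormedSpace 𝕜 G]

lemma iteratedFDeriv_comp_continuousLinearMap (g : G →L[𝕜] E) {f : E → F} {x : G} {n : ℕ}
    (hf : ContDiffAt 𝕜 n f (g x)) :
    iteratedFDeriv 𝕜 n (f ∘ g) x =
      (iteratedFDeriv 𝕜 n f (g x)).compContinuousLinearMap fun _ => g := by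
  obtain ⟨u, hu, hfu⟩ := hf.contDiffOn le_rfl (by simp)
  obtain ⟨s, hsu, hs, hxs⟩ := mem_nhds_iff.1 hu
  have hs' : IsOpen (g ⁻¹' s) := hs.preimage g.continuous
  rw [← iteratedFDerivWithin_of_isOpen n hs' hxs, ← iteratedFDerivWithin_of_isOpen n hs hxs]
  exact g.iteratedFDerivWithin_comp_right (hfu.mono hsu) hs.uniqueDiffOn hs'.uniqueDiffOn hxs le_rfl

lemma iteratedFDeriv_comp_continuousLinearMap_apply (g : G →L[𝕜] 𝕜) {f : 𝕜 → F} {x : G} {n : ℕ}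
    (hf : ContDiffAt 𝕜 n f (g x)) (w : Fin n → G) :
    iteratedFDeriv 𝕜 n (f ∘ g) x w = (∏ k, g (w k)) • iteratedDeriv n f (g x) := by
  rw [iteratedFDeriv_comp_continuousLinearMap g hf,
    ContinuousMultilinearMap.compContinuousLinearMap_apply,
    iteratedFDeriv_apply_eq_iteratedDeriv_mul_prod]

end IteratedDerivative

section CumulantRules

open ProbabilityTheory

variable {Ω : Type*} [MeasurableSpace Ω] {P : Measure Ω} {X : Ω → ℝ}

lemma cumulant1_map (hX : AEMeasurable X P) (d : ℕ) :
    cumulant1 d (P.map X) = iteratedDeriv d (cgf X P) 0 := by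
  have cgf_id_map : cgf id (P.map X) = cgf X P := by
    ext t
    rw [cgf, mgf_id_map hX, cgf]
  rw [← cgf_id_map]
  rfl

lemma integrableExpSet_id_map (hX : AEMeasurable X P) :
    integrableExpSet id (P.map X) = integrableExpSet X P := by
  ext t
  exact integrable_map_measure (by fun_prop) hX

lemma cumulant1_map_const_mul (hX : 0 ∈ interior (integrableExpSet X P)) (a : ℝ) (d : ℕ) :
    cumulant1 d (P.map fun ω => a * X ω) = a ^ d * cumulant1 d (P.map X) := by
  have X_meas : AEMeasurable X P := aemeasurable_of_mem_interior_integrableExpSet hX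
  let g : ℝ →L[ℝ] ℝ := a • ContinuousLinearMap.id ℝ ℝ
  have cgf_const_mul : cgf (fun ω => a * X ω) P = cgf X P ∘ g := by
    ext t
    simp [cgf, mgf_const_mul, g]
  have cgf_contDiffAt : ContDiffAt ℝ d (cgf X P) (g 0) := by
    simpa using (analyticAt_cgf hX).contDiffAt
  rw [cumulant1_map (X_meas.const_mul a), cumulant1_map X_meas, cgf_const_mul,
    iteratedDeriv_eq_iteratedFDeriv, iteratedFDeriv_comp_continuousLinearMap_apply g cgf_contDiffAt]
  simp [g]

variable {r : Type*} [Fintype r] {z : r → Ω → ℝ} {n : ℕ}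

lemma log_integral_exp_map_sum_smul (hz : iIndepFun z P) (z_meas : ∀ s, AEMeasurable (z s) P)
    (v : r → Fin n → ℝ) {t : Fin n → ℝ} (ht : ∀ s, t ⬝ᵥ v s ∈ integrableExpSet (z s) P) :
    Real.log (∫ x, Real.exp (∑ j, t j * x j) ∂(P.map fun ω => ∑ s, z s ω • v s)) =
      ∑ s, cgf (z s) P (t ⬝ᵥ v s) := by
  have pairing (ω : Ω) :
      ∑ j, t j * (∑ s, z s ω • v s) j = 1 * (∑ s, (fun ω => (t ⬝ᵥ v s) * z s ω)) ω := by
    simp only [Finset.sum_apply, Pi.smul_apply, smul_eq_mul, Finset.mul_sum, dotProduct,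
      Finset.sum_mul, one_mul]
    rw [Finset.sum_comm]
    exact Finset.sum_congr rfl fun s _ => Finset.sum_congr rfl fun j _ => by ring
  calc Real.log (∫ x, Real.exp (∑ j, t j * x j) ∂(P.map fun ω => ∑ s, z s ω • v s))
      = cgf (∑ s, (fun ω => (t ⬝ᵥ v s) * z s ω)) P 1 := by
        rw [integral_map (by fun_prop) (Continuous.aestronglyMeasurable (by fun_prop)), cgf, mgf]
        simp only [pairing]
    _ = ∑ s, cgf (fun ω => (t ⬝ᵥ v s) * z s ω) P 1 :=
        (hz.comp (fun s x => (t ⬝ᵥ v s) * x) fun _ => by fun_prop).cgf_sum₀ (by fun_prop)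
          fun s _ => by
            simpa only [one_mul, Function.comp_apply] using
              integrable_of_mem_integrableExpSet (ht s)
    _ = ∑ s, cgf (z s) P (t ⬝ᵥ v s) := by simp [cgf, mgf_const_mul]

lemma cumulantTensor_map_sum_smul (hz : iIndepFun z P)
    (hexp : ∀ s, 0 ∈ interior (integrableExpSet (z s) P)) (v : r → Fin n → ℝ) {d : ℕ}
    (i : Fin d → Fin n) :
    cumulantTensor d n (P.map fun ω => ∑ s, z s ω • v s) i =
      ∑ s, cumulant1 d (P.map (z s)) * ∏ k, v s (i k) := by
  have z_meas (s : r) : AEMeasurable (z s) P :=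
    aemeasurable_of_mem_interior_integrableExpSet (hexp s)
  let g (s : r) : (Fin n → ℝ) →L[ℝ] ℝ :=
    LinearMap.toContinuousLinearMap (Fintype.linearCombination ℝ (v s))
  have g_apply (s : r) (t : Fin n → ℝ) : g s t = t ⬝ᵥ v s := rfl
  have cgf_contDiffAt (s : r) : ContDiffAt ℝ d (cgf (z s) P) (g s 0) := by
    simpa using (analyticAt_cgf (hexp s)).contDiffAt
  have eventually_eq_sum_cgf :
      (fun t : Fin n → ℝ =>
        Real.log (∫ x, Real.exp (∑ j, t j * x j) ∂(P.map fun ω => ∑ s, z s ω • v s)))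
      =ᶠ[nhds 0] ∑ s, cgf (z s) P ∘ g s := by
    have eventually_mem : ∀ᶠ t in nhds 0, ∀ s, g s t ∈ integrableExpSet (z s) P :=
      Filter.eventually_all.2 fun s => (g s).continuous.continuousAt.eventually_mem <| by
        simpa using mem_interior_iff_mem_nhds.1 (hexp s)
    filter_upwards [eventually_mem] with t ht
    simpa [g_apply] using log_integral_exp_map_sum_smul hz z_meas v ht
  rw [cumulantTensor, (Filter.EventuallyEq.iteratedFDeriv ℝ eventually_eq_sum_cgf d).eq_of_nhds,
    iteratedFDeriv_sum_apply fun s _ => (cgf_contDiffAt s).comp 0 (g s).contDiff.contDiffAt,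
    sum_apply]
  refine Finset.sum_congr rfl fun s _ => ?_
  rw [iteratedFDeriv_comp_continuousLinearMap_apply (g s) (cgf_contDiffAt s), map_zero,
    cumulant1_map (z_meas s), smul_eq_mul, mul_comm]
  simp [g_apply]

end CumulantRules

section BernoulliCumulants

open ProbabilityTheory Polynomial unitInterval

/-- `bernoulliCumulantPoly m` is the polynomial expressing the `(m + 1)`-st cumulant of the
Bernoulli distribution in terms of its parameter. The index is shifted because the recursion only
starts at the first cumulant: the zeroth one is `0`. -/
noncomputable def bernoulliCumulantPoly : ℕ → ℝ[X]
  | 0 => X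
  | m + 1 => X * (1 - X) * derivative (bernoulliCumulantPoly m)

/-- The parameter of the Bernoulli distribution of parameter `p` after exponential tilting by `t`,
that is, after reweighting by the density proportional to `x ↦ exp (t * x)`. -/
noncomputable def bernoulliTilt (p t : ℝ) : ℝ :=
  p * Real.exp t / (1 - p + p * Real.exp t)

lemma integrableExpSet_bernoulliMeasure {S : Type*} [MeasurableSpace S]
    [MeasurableSingletonClass S] (X : S → ℝ) (x y : S) (p : I) :
    integrableExpSet X (bernoulliMeasure x y p) = Set.univ :=
  Set.eq_univ_of_forall fun _ => integrable_bernoulliMeasure x y p _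

lemma mgf_id_bernoulliMeasure (p : I) (t : ℝ) :
    mgf id (bernoulliMeasure (1 : ℝ) 0 p) t = 1 - p + p * Real.exp t := by
  simp [mgf, integral_bernoulliMeasure, add_comm]

lemma one_sub_add_mul_exp_pos (p : I) (t : ℝ) : 0 < 1 - p + p * Real.exp t :=
  mgf_id_bernoulliMeasure p t ▸ mgf_pos (integrable_bernoulliMeasure _ _ p _)

lemma hasDerivAt_one_sub_add_mul_exp (p t : ℝ) :
    HasDerivAt (fun t => 1 - p + p * Real.exp t) (p * Real.exp t) t :=
  ((Real.hasDerivAt_exp t).const_mul p).const_add (1 - p)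

lemma deriv_cgf_id_bernoulliMeasure (p : I) :
    deriv (cgf id (bernoulliMeasure (1 : ℝ) 0 p)) = bernoulliTilt p := by
  ext t
  have cgf_eq : cgf id (bernoulliMeasure (1 : ℝ) 0 p) =
      fun t => Real.log (1 - p + p * Real.exp t) := by
    ext t
    rw [cgf, mgf_id_bernoulliMeasure]
  rw [cgf_eq]
  exact ((hasDerivAt_one_sub_add_mul_exp p t).log (one_sub_add_mul_exp_pos p t).ne').deriv

lemma hasDerivAt_bernoulliTilt (p : I) (t : ℝ) :
    HasDerivAt (bernoulliTilt p) (bernoulliTilt p t * (1 - bernoulliTilt p t)) t := by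
  have mgf_ne_zero := (one_sub_add_mul_exp_pos p t).ne'
  have quotient_rule := ((Real.hasDerivAt_exp t).const_mul (p : ℝ)).div
    (hasDerivAt_one_sub_add_mul_exp p t) mgf_ne_zero
  refine quotient_rule.congr_deriv ?_
  rw [bernoulliTilt]
  field_simp

lemma iteratedDeriv_cgf_id_bernoulliMeasure (p : I) (m : ℕ) :
    iteratedDeriv (m + 1) (cgf id (bernoulliMeasure (1 : ℝ) 0 p)) =
      fun t => (bernoulliCumulantPoly m).eval (bernoulliTilt p t) := by
  induction m with
  | zero => simp [deriv_cgf_id_bernoulliMeasure, bernoulliCumulantPoly]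
  | succ m ih =>
    ext t
    rw [iteratedDeriv_succ, ih]
    have chain_rule := ((bernoulliCumulantPoly m).hasDerivAt (bernoulliTilt p t)).comp t
      (hasDerivAt_bernoulliTilt p t)
    refine chain_rule.deriv.trans ?_
    simp [bernoulliCumulantPoly, mul_comm]

lemma cumulant1_bernoulliMeasure (p : I) (m : ℕ) :
    cumulant1 (m + 1) (bernoulliMeasure (1 : ℝ) 0 p) = (bernoulliCumulantPoly m).eval (p : ℝ) := by
  have tilt_zero : bernoulliTilt p 0 = p := by simp [bernoulliTilt]
  rw [← tilt_zero]
  exact congrFun (iteratedDeriv_cgf_id_bernoulliMeasure p m) 0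

lemma bernoulliCumulantPoly_eval_zero (m : ℕ) : (bernoulliCumulantPoly m).eval 0 = 0 := by
  cases m <;> simp [bernoulliCumulantPoly]

lemma bernoulliCumulantPoly_succ_eval_one (m : ℕ) :
    (bernoulliCumulantPoly (m + 1)).eval 1 = 0 := by
  simp [bernoulliCumulantPoly]

lemma bernoulliCumulantPoly_ne_zero (m : ℕ) : bernoulliCumulantPoly m ≠ 0 := by
  induction m with
  | zero => exact X_ne_zero
  | succ m ih =>
    have one_sub_X_ne_zero : (1 - X : ℝ[X]) ≠ 0 := fun h => by
      simpa using congrArg (eval 0) h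
    refine mul_ne_zero (mul_ne_zero X_ne_zero one_sub_X_ne_zero) fun derivative_eq_zero => ih ?_
    have eq_const := eq_C_of_derivative_eq_zero derivative_eq_zero
    rw [eq_const, coeff_zero_eq_eval_zero, bernoulliCumulantPoly_eval_zero, C_0]

lemma exists_derivative_eval_neg_of_isRoot {Q : ℝ[X]} (hQ : Q ≠ 0) {a b : ℝ} (hab : a < b)
    (ha : Q.IsRoot a) (hb : Q.IsRoot b) : ∃ x ∈ Set.Ioo a b, (derivative Q).eval x < 0 := by
  by_contra! derivative_nonneg
  have monotone : MonotoneOn (fun x => Q.eval x) (Set.Icc a b) :=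
    monotoneOn_of_deriv_nonneg (convex_Icc a b) Q.continuousOn Q.differentiableOn
      fun x hx => by simpa using derivative_nonneg x (interior_Icc (a := a) ▸ hx)
  refine hQ (eq_zero_of_infinite_isRoot Q ((Set.Icc_infinite hab).mono fun x hx => ?_))
  exact le_antisymm
    ((monotone hx (Set.right_mem_Icc.2 hab.le) hx.2).trans_eq hb)
    (ha.symm.trans_le (monotone (Set.left_mem_Icc.2 hab.le) hx hx.1))

lemma exists_derivative_eval_pos_of_isRoot {Q : ℝ[X]} (hQ : Q ≠ 0) {a b : ℝ} (hab : a < b)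
    (ha : Q.IsRoot a) (hb : Q.IsRoot b) : ∃ x ∈ Set.Ioo a b, 0 < (derivative Q).eval x := by
  simpa using exists_derivative_eval_neg_of_isRoot (neg_ne_zero.2 hQ) hab
    (by simpa using ha) (by simpa using hb)

lemma cumulant1_bernoulliMeasure_add_two (p : I) (m : ℕ) :
    cumulant1 (m + 2) (bernoulliMeasure (1 : ℝ) 0 p) =
      p * (1 - p) * (derivative (bernoulliCumulantPoly m)).eval (p : ℝ) := by
  simp [cumulant1_bernoulliMeasure, bernoulliCumulantPoly]

lemma exists_cumulant1_bernoulliMeasure_neg {d : ℕ} (hd : 3 ≤ d) :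
    ∃ p : I, cumulant1 d (bernoulliMeasure (1 : ℝ) 0 p) < 0 := by
  obtain ⟨m, rfl⟩ := Nat.exists_eq_add_of_le' hd
  obtain ⟨p, hp, derivative_neg⟩ := exists_derivative_eval_neg_of_isRoot
    (bernoulliCumulantPoly_ne_zero (m + 1)) zero_lt_one
    (bernoulliCumulantPoly_eval_zero _) (bernoulliCumulantPoly_succ_eval_one m)
  refine ⟨⟨p, Set.Ioo_subset_Icc_self hp⟩, ?_⟩
  rw [cumulant1_bernoulliMeasure_add_two]
  exact mul_neg_of_pos_of_neg (mul_pos hp.1 (sub_pos.2 hp.2)) derivative_neg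

lemma exists_cumulant1_bernoulliMeasure_pos {d : ℕ} (hd : 3 ≤ d) :
    ∃ p : I, 0 < cumulant1 d (bernoulliMeasure (1 : ℝ) 0 p) := by
  obtain ⟨m, rfl⟩ := Nat.exists_eq_add_of_le' hd
  obtain ⟨p, hp, derivative_pos⟩ := exists_derivative_eval_pos_of_isRoot
    (bernoulliCumulantPoly_ne_zero (m + 1)) zero_lt_one
    (bernoulliCumulantPoly_eval_zero _) (bernoulliCumulantPoly_succ_eval_one m)
  refine ⟨⟨p, Set.Ioo_subset_Icc_self hp⟩, ?_⟩
  rw [cumulant1_bernoulliMeasure_add_two]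
  exact mul_pos (mul_pos hp.1 (sub_pos.2 hp.2)) derivative_pos

lemma exists_cumulant1_bernoulliMeasure_eq {d : ℕ} (hd : 3 ≤ d) (c : ℝ) :
    ∃ (a : ℝ) (p : I), cumulant1 d (bernoulliMeasure a 0 p) = c := by
  obtain ⟨p, cumulant_ne_zero, ratio_nonneg⟩ :
      ∃ p : I, cumulant1 d (bernoulliMeasure (1 : ℝ) 0 p) ≠ 0 ∧
        0 ≤ c / cumulant1 d (bernoulliMeasure (1 : ℝ) 0 p) := by
    rcases le_total 0 c with hc | hc
    · obtain ⟨p, hp⟩ := exists_cumulant1_bernoulliMeasure_pos hd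
      exact ⟨p, hp.ne', div_nonneg hc hp.le⟩
    · obtain ⟨p, hp⟩ := exists_cumulant1_bernoulliMeasure_neg hd
      exact ⟨p, hp.ne, div_nonneg_of_nonpos hc hp.le⟩
  obtain ⟨a, ha⟩ : ∃ a : ℝ, a ^ d = c / cumulant1 d (bernoulliMeasure (1 : ℝ) 0 p) :=
    ⟨_, Real.rpow_inv_natCast_pow ratio_nonneg (by lia)⟩
  have scaling := cumulant1_map_const_mul (X := id) (P := bernoulliMeasure (1 : ℝ) 0 p)
    (by simp [integrableExpSet_bernoulliMeasure]) a d
  refine ⟨a, p, ?_⟩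
  simpa [ha, div_mul_cancel₀ _ cumulant_ne_zero] using scaling

end BernoulliCumulants

section Realization

open ProbabilityTheory

lemma exists_cumulant1_eq {d : ℕ} (hd : 3 ≤ d) (c : ℝ) :
    ∃ μ : Measure ℝ, IsProbabilityMeasure μ ∧ 0 ∈ interior (integrableExpSet id μ) ∧
      cumulant1 d μ = c := by
  obtain ⟨a, p, hap⟩ := exists_cumulant1_bernoulliMeasure_eq hd c
  exact ⟨bernoulliMeasure a 0 p, inferInstance, by simp [integrableExpSet_bernoulliMeasure], hap⟩

lemma exists_cumulantTensor_eq_sum {r : Type*} [Fintype r] {n d : ℕ} (μ : r → Measure ℝ)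
    [∀ s, IsProbabilityMeasure (μ s)] (hμ : ∀ s, 0 ∈ interior (integrableExpSet id (μ s)))
    (v : r → Fin n → ℝ) :
    ∃ ν : Measure (Fin n → ℝ), IsProbabilityMeasure ν ∧
      ∀ i : Fin d → Fin n, cumulantTensor d n ν i = ∑ s, cumulant1 d (μ s) * ∏ k, v s (i k) := by
  have marginal (s : r) : (Measure.pi μ).map (Function.eval s) = μ s :=
    (measurePreserving_eval μ s).map_eq
  have marginal_exp (s : r) : 0 ∈ interior (integrableExpSet (Function.eval s) (Measure.pi μ)) := by
    rw [← integrableExpSet_id_map (measurable_pi_apply s).aemeasurable, marginal]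
    exact hμ s
  have indep : iIndepFun (fun s : r => Function.eval s) (Measure.pi μ) :=
    iIndepFun_pi (X := fun _ => id) fun _ => aemeasurable_id
  refine ⟨(Measure.pi μ).map fun x => ∑ s, x s • v s,
    Measure.isProbabilityMeasure_map (Measurable.aemeasurable (by fun_prop)), fun i => ?_⟩
  simpa only [marginal] using cumulantTensor_map_sum_smul indep marginal_exp v i

end Realization

/-- For every `d ≥ 3` and every real `c`, some probability distribution on `ℝ` has `d`-th
cumulant equal to `c`. Consequently, for `d ≥ 3` every symmetric tensor `T ∈ S^d(ℝ^n)`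
is the `d`-th cumulant tensor of some `ℝ^n`-valued random vector. -/
theorem cumulant_surjective :
    (∀ d : ℕ, 3 ≤ d → ∀ c : ℝ, ∃ μ : Measure ℝ,
      IsProbabilityMeasure μ ∧ cumulant1 d μ = c) ∧
    (∀ d : ℕ, 3 ≤ d → ∀ n : ℕ, ∀ T : (Fin d → Fin n) → ℝ,
      (∀ (σ : Equiv.Perm (Fin d)) (i : Fin d → Fin n), T (i ∘ σ) = T i) →
      ∃ μ : Measure (Fin n → ℝ), IsProbabilityMeasure μ ∧
        ∀ i : Fin d → Fin n, cumulantTensor d n μ i = T i) := by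
  refine ⟨fun d hd c => ?_, fun d hd n T hT => ?_⟩
  · obtain ⟨μ, hμ, -, hc⟩ := exists_cumulant1_eq hd c
    exact ⟨μ, hμ, hc⟩
  · obtain ⟨r, c, v, T_eq⟩ := exists_eq_sum_mul_prod_of_symmetric hT
    choose μ μ_prob μ_exp μ_cumulant using fun s => exists_cumulant1_eq hd (c s)
    obtain ⟨ν, ν_prob, ν_cumulant⟩ := exists_cumulantTensor_eq_sum (d := d) μ μ_exp v
    exact ⟨ν, ν_prob, fun i => by simp only [ν_cumulant, μ_cumulant, T_eq]⟩
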